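/- arXiv:1610.06390 — 3 statements merged into one kernel-verified Lean document; each statement's English description precedes it below -/
import Mathlib

section
/- The 4-forms θ0i∧θ1i, θ0j∧θ1j, θ0k∧θ1k are all equal: θ0i∧θ1i = θ0j∧θ1j = θ0k∧θ1k. -/
/-!
Each product `θ0q * θ1q` expands to the same normal form
`dy2 dy3 dy4 dx1 - dy1 dy3 dy4 dx2 + dy1 dy2 dy4 dx3 - dy1 dy2 dy3 dx4`:
in the expansion, every monomial with a repeated `dy` vanishes, and the remaining cubic `dy`-factors
are sorted by anticommutativity. The relations `e8_mul_self_assoc` and `e8_mul_swap_assoc`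
serve as the rewriting rules.
-/

noncomputable section

open ExteriorAlgebra

/-- Basis 1-forms of the dual of `ℝ^8`, modelled as generators of the exterior algebra of an
8-dimensional real vector space. -/
def e8 (i : Fin 8) : ExteriorAlgebra ℝ (Fin 8 → ℝ) :=
  ExteriorAlgebra.ι ℝ (Pi.single i 1)

def dx1 : ExteriorAlgebra ℝ (Fin 8 → ℝ) := e8 0
def dx2 : ExteriorAlgebra ℝ (Fin 8 → ℝ) := e8 1
def dx3 : ExteriorAlgebra ℝ (Fin 8 → ℝ) := e8 2
def dx4 : ExteriorAlgebra ℝ (Fin 8 → ℝ) := e8 3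
def dy1 : ExteriorAlgebra ℝ (Fin 8 → ℝ) := e8 4
def dy2 : ExteriorAlgebra ℝ (Fin 8 → ℝ) := e8 5
def dy3 : ExteriorAlgebra ℝ (Fin 8 → ℝ) := e8 6
def dy4 : ExteriorAlgebra ℝ (Fin 8 → ℝ) := e8 7

def θ0i : ExteriorAlgebra ℝ (Fin 8 → ℝ) := dy1 * dy2 - dy3 * dy4
def θ0j : ExteriorAlgebra ℝ (Fin 8 → ℝ) := dy1 * dy3 + dy2 * dy4
def θ0k : ExteriorAlgebra ℝ (Fin 8 → ℝ) := dy1 * dy4 - dy2 * dy3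
def θ1i : ExteriorAlgebra ℝ (Fin 8 → ℝ) := dy1 * dx2 - dy2 * dx1 + dy4 * dx3 - dy3 * dx4
def θ1j : ExteriorAlgebra ℝ (Fin 8 → ℝ) := dy1 * dx3 + dy2 * dx4 - dy3 * dx1 - dy4 * dx2
def θ1k : ExteriorAlgebra ℝ (Fin 8 → ℝ) := dy1 * dx4 - dy4 * dx1 + dy3 * dx2 - dy2 * dx3
def θ2i : ExteriorAlgebra ℝ (Fin 8 → ℝ) := dx1 * dx2 - dx3 * dx4
def θ2j : ExteriorAlgebra ℝ (Fin 8 → ℝ) := dx1 * dx3 + dx2 * dx4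
def θ2k : ExteriorAlgebra ℝ (Fin 8 → ℝ) := dx1 * dx4 - dx2 * dx3
def θs : ExteriorAlgebra ℝ (Fin 8 → ℝ) := -(dy1 * dx1 + dy2 * dx2 + dy3 * dx3 + dy4 * dx4)

lemma e8_mul_self (i : Fin 8) : e8 i * e8 i = 0 :=
  ExteriorAlgebra.ι_sq_zero _

lemma e8_mul_swap (i j : Fin 8) : e8 j * e8 i = -(e8 i * e8 j) :=
  eq_neg_of_add_eq_zero_left (ExteriorAlgebra.ι_add_mul_swap _ _)

lemma e8_mul_self_assoc (i : Fin 8) (a : ExteriorAlgebra ℝ (Fin 8 → ℝ)) :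
    e8 i * (e8 i * a) = 0 := by
  rw [← mul_assoc, e8_mul_self, zero_mul]

lemma e8_mul_swap_assoc (i j : Fin 8) (a : ExteriorAlgebra ℝ (Fin 8 → ℝ)) :
    e8 j * (e8 i * a) = -(e8 i * (e8 j * a)) := by
  rw [← mul_assoc, e8_mul_swap, neg_mul, mul_assoc]

theorem theta0_theta1_diag :
    θ0i * θ1i = θ0j * θ1j ∧ θ0j * θ1j = θ0k * θ1k := by
  -- Only the `dy`s (indices 4 to 7) need sorting: each `dx` already stands last in its monomial.
  constructor <;>
  · simp only [θ0i, θ0j, θ0k, θ1i, θ1j, θ1k, dx1, dx2, dx3, dx4, dy1, dy2, dy3, dy4,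
      mul_add, add_mul, mul_sub, sub_mul, mul_assoc, e8_mul_self_assoc,
      e8_mul_swap_assoc 4 5, e8_mul_swap_assoc 4 6, e8_mul_swap_assoc 4 7,
      e8_mul_swap_assoc 5 6, e8_mul_swap_assoc 5 7, e8_mul_swap_assoc 6 7,
      mul_neg, mul_zero, neg_neg, neg_zero]
    abel

end
end

section
/- One has θ0i∧θ1j = −θ0j∧θ1i = −θ0k∧θs, and the identities obtained by cyclically permuting (i,j,k) hold as well: θ0j∧θ1k = −θ0k∧θ1j = −θ0i∧θs and θ0k∧θ1i = −θ0i∧θ1k = −θ0j∧θs. -/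
/-! The forms are expanded into words `e_a e_b e_c e_d` in the basis 1-forms, and `e_a e_a = 0`,
`e_a e_b = -e_b e_a` sort the `dy` factors of each word by index. (The single `dx` factor
always comes last.) For each cyclic permutation the three products then have, up to sign, the
same four-term normal form; for instance, with `y_abc = dy_a ∧ dy_b ∧ dy_c`,
`θ0i ∧ θ1j = -(y_123 ∧ dx1 + y_124 ∧ dx2 + y_134 ∧ dx3 + y_234 ∧ dx4)`. -/

noncomputable section

open ExteriorAlgebra

theorem e8_mul_self_mul (a : Fin 8) (w : ExteriorAlgebra ℝ (Fin 8 → ℝ)) :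
    e8 a * (e8 a * w) = 0 := by
  rw [← mul_assoc, e8, ι_sq_zero, zero_mul]

theorem e8_mul_e8_mul (a b : Fin 8) (w : ExteriorAlgebra ℝ (Fin 8 → ℝ)) :
    e8 a * (e8 b * w) = -(e8 b * (e8 a * w)) := by
  rw [← mul_assoc, ← mul_assoc, ← neg_mul]
  congr 1
  exact eq_neg_of_add_eq_zero_left (ι_add_mul_swap _ _)

theorem theta0_theta1_offdiag :
    (θ0i * θ1j = -(θ0j * θ1i) ∧ θ0i * θ1j = -(θ0k * θs)) ∧
    (θ0j * θ1k = -(θ0k * θ1j) ∧ θ0j * θ1k = -(θ0i * θs)) ∧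
    (θ0k * θ1i = -(θ0i * θ1k) ∧ θ0k * θ1i = -(θ0j * θs)) := by
  -- Instances with decreasing `dy` indices only, so that rewriting sorts and terminates.
  have h54 := e8_mul_e8_mul 5 4
  have h64 := e8_mul_e8_mul 6 4
  have h74 := e8_mul_e8_mul 7 4
  have h65 := e8_mul_e8_mul 6 5
  have h75 := e8_mul_e8_mul 7 5
  have h76 := e8_mul_e8_mul 7 6
  simp only [θ0i, θ0j, θ0k, θ1i, θ1j, θ1k, θs, dx1, dx2, dx3, dx4, dy1, dy2, dy3, dy4,
    mul_add, add_mul, mul_sub, sub_mul, mul_neg, mul_assoc, e8_mul_self_mul,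
    h54, h64, h74, h65, h75, h76, mul_zero, neg_zero]
  refine ⟨⟨?_, ?_⟩, ⟨?_, ?_⟩, ?_, ?_⟩ <;> abel

end
end

section
/- Let n, k, a, b be natural numbers with k ≥ 1, 2k + 1 ≤ n, a ≥ 2, and 1 ≤ b ≤ k. Define λ_1 = a, λ_j = 2 for 2 ≤ j ≤ b, and λ_j = 0 for b < j ≤ k. Then the product over j = 1, …, k of Γ((λ_j+k+1−j)/2)·Γ((λ_j+n−k−j)/2) / ( Γ((λ_j+k+2−j)/2)·Γ((λ_j+n−k+1−j)/2) ) equals [Γ((a+k)/2)·Γ((a+n−k−1)/2) / (Γ((a+k+1)/2)·Γ((a+n−k)/2))] · [Γ(1/2)·Γ((n−2k)/2) / (Γ((k+2)/2)·Γ((n−k+1)/2))] · (k−b+1)·(n−k−b)/4, where Γ denotes the real Gamma function. (All Gamma arguments occurring are positive under the stated hypotheses.) -/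
/-!
Apart from the factor `j = 1`, which depends on `a`, every factor with `λ_j = 0` has the form
`Γ(x) Γ(y) / (Γ(x + 1/2) Γ(y + 1/2))` with `x = (k + 1 - j) / 2`, `y = (n - k - j) / 2`, and both
quotients telescope in `j`. Replacing `λ_j = 0` by `λ_j = 2` shifts all four arguments by one, so by
`Γ(s + 1) = s Γ(s)` it multiplies the factor by `x y / ((x + 1/2) (y + 1/2))`, which telescopes
too. `partial_prod` records the resulting closed form of the product over `1 ≤ j ≤ m`; the theorem
is the case `m = k`.
-/

open Real

/-- The highest weight `λ = (a, 2, …, 2, 0, …, 0)` with `b` nonzero entries: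
`λ_1 = a`, `λ_j = 2` for `2 ≤ j ≤ b`, and `λ_j = 0` for `j > b`. -/
noncomputable def hwt (a b : ℕ) (j : ℕ) : ℝ :=
  if j = 1 then (a : ℝ) else if j ≤ b then 2 else 0

/-- Closed form of the partial product over `1 ≤ j ≤ m`. The number of indices `j ≤ b` among them is
`min b m`, which takes the place of `b` in the rational factor. -/
lemma partial_prod (n k a b : ℕ) (hn : 2 * k + 1 ≤ n) (hb1 : 1 ≤ b)
    (m : ℕ) (hm : 1 ≤ m) (hmk : m ≤ k) :
    (∏ j ∈ Finset.Icc 1 m,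
        Real.Gamma ((hwt a b j + k + 1 - j) / 2) * Real.Gamma ((hwt a b j + n - k - j) / 2) /
          (Real.Gamma ((hwt a b j + k + 2 - j) / 2) *
            Real.Gamma ((hwt a b j + n - k + 1 - j) / 2))) =
      Real.Gamma ((a + k) / 2) * Real.Gamma ((a + n - k - 1) / 2) /
          (Real.Gamma ((a + k + 1) / 2) * Real.Gamma ((a + n - k) / 2)) *
        (Real.Gamma ((k + 1 - m) / 2) * Real.Gamma ((n - k - m) / 2) /
          (Real.Gamma ((k + 2) / 2) * Real.Gamma ((n - k + 1) / 2))) *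
        (((k : ℝ) - (min b m : ℕ) + 1) * ((n : ℝ) - k - (min b m : ℕ)) / 4) := by
  have hn' : 2 * (k : ℝ) + 1 ≤ n := by exact_mod_cast hn
  induction m, hm using Nat.le_induction with
  | base =>
    have hk' : (1 : ℝ) ≤ k := by exact_mod_cast hmk
    rw [Finset.Icc_self, Finset.prod_singleton, min_eq_right hb1]
    have hx : (0 : ℝ) < k / 2 := by linarith
    have hy : (0 : ℝ) < (n - k - 1) / 2 := by linarith
    have e1 : Real.Gamma (((k : ℝ) + 2) / 2) = k / 2 * Real.Gamma (k / 2) := by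
      rw [← Real.Gamma_add_one hx.ne']; congr 1; ring
    have e2 : Real.Gamma (((n : ℝ) - k + 1) / 2)
        = (n - k - 1) / 2 * Real.Gamma ((n - k - 1) / 2) := by
      rw [← Real.Gamma_add_one hy.ne']; congr 1; ring
    have h1 := (Real.Gamma_pos_of_pos hx).ne'
    have h2 := (Real.Gamma_pos_of_pos hy).ne'
    -- At `m = 1` everything except the `a`-dependent quotient cancels.
    have key : Real.Gamma ((k : ℝ) / 2) * Real.Gamma ((n - k - 1) / 2) /
          (k / 2 * Real.Gamma (k / 2) * ((n - k - 1) / 2 * Real.Gamma ((n - k - 1) / 2))) *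
        (k * (n - k - 1) / 4) = 1 := by
      have h3 : (k : ℝ) ≠ 0 := by linarith
      have h4 : (n : ℝ) - k - 1 ≠ 0 := by linarith
      generalize Real.Gamma ((k : ℝ) / 2) = G at *
      generalize Real.Gamma (((n : ℝ) - k - 1) / 2) = H at *
      field_simp
      norm_num
    rw [e1, e2, mul_assoc]
    simp only [hwt, if_true, Nat.cast_one, add_sub_cancel_right, sub_add_cancel]
    rw [key, mul_one, show (a : ℝ) + k + 2 - 1 = a + k + 1 by ring]
  | succ m hm ih =>
    have hk' : (m : ℝ) + 1 ≤ k := by exact_mod_cast hmk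
    rw [Finset.prod_Icc_succ_top (by omega), ih (by omega)]
    generalize Real.Gamma (((a : ℝ) + k) / 2) * Real.Gamma ((a + n - k - 1) / 2) /
          (Real.Gamma ((a + k + 1) / 2) * Real.Gamma ((a + n - k) / 2)) = A
    generalize Real.Gamma (((k : ℝ) + 2) / 2) * Real.Gamma ((n - k + 1) / 2) = B
    obtain ⟨x, hx⟩ : ∃ x : ℝ, x = (k - m) / 2 := ⟨_, rfl⟩
    obtain ⟨y, hy⟩ : ∃ y : ℝ, y = (n - k - m - 1) / 2 := ⟨_, rfl⟩
    have x0 : 0 < x := by linarith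
    have y0 : 0 < y := by linarith
    have x1 : 0 < x + 1 / 2 := by linarith
    have y1 : 0 < y + 1 / 2 := by linarith
    have h3 := (Real.Gamma_pos_of_pos x1).ne'
    have h4 := (Real.Gamma_pos_of_pos y1).ne'
    rw [show ((k : ℝ) + 1 - m) / 2 = x + 1 / 2 by rw [hx]; ring,
      show ((n : ℝ) - k - m) / 2 = y + 1 / 2 by rw [hy]; ring,
      show ((k : ℝ) + 1 - (m + 1 : ℕ)) / 2 = x by rw [hx]; push_cast; ring,
      show ((n : ℝ) - k - (m + 1 : ℕ)) / 2 = y by rw [hy]; push_cast; ring]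
    by_cases hb : m + 1 ≤ b
    · have hw : hwt a b (m + 1) = 2 := by
        simp [hwt, hb, show m ≠ 0 by omega]
      rw [hw, min_eq_right hb, min_eq_right (by omega : m ≤ b),
        show ((2 : ℝ) + k + 1 - (m + 1 : ℕ)) / 2 = x + 1 by rw [hx]; push_cast; ring,
        show ((2 : ℝ) + n - k - (m + 1 : ℕ)) / 2 = y + 1 by rw [hy]; push_cast; ring,
        show ((2 : ℝ) + k + 2 - (m + 1 : ℕ)) / 2 = x + 1 / 2 + 1 by rw [hx]; push_cast; ring,
        show ((2 : ℝ) + n - k + 1 - (m + 1 : ℕ)) / 2 = y + 1 / 2 + 1 by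
          rw [hy]; push_cast; ring,
        Real.Gamma_add_one x0.ne', Real.Gamma_add_one y0.ne', Real.Gamma_add_one x1.ne',
        Real.Gamma_add_one y1.ne',
        show (k : ℝ) - m + 1 = 2 * (x + 1 / 2) by rw [hx]; ring,
        show (n : ℝ) - k - m = 2 * (y + 1 / 2) by rw [hy]; ring,
        show (k : ℝ) - (m + 1 : ℕ) + 1 = 2 * x by rw [hx]; push_cast; ring,
        show (n : ℝ) - k - (m + 1 : ℕ) = 2 * y by rw [hy]; push_cast; ring]
      generalize Real.Gamma (x + 1 / 2) = G at *
      generalize Real.Gamma (y + 1 / 2) = H at *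
      generalize x + 1 / 2 = u at *
      generalize y + 1 / 2 = v at *
      have := x1.ne'
      have := y1.ne'
      field_simp
    · have hw : hwt a b (m + 1) = 0 := by
        simp [hwt, hb, show m ≠ 0 by omega]
      rw [hw, min_eq_left (by omega : b ≤ m + 1), min_eq_left (by omega : b ≤ m),
        show ((0 : ℝ) + k + 1 - (m + 1 : ℕ)) / 2 = x by rw [hx]; push_cast; ring,
        show ((0 : ℝ) + n - k - (m + 1 : ℕ)) / 2 = y by rw [hy]; push_cast; ring,
        show ((0 : ℝ) + k + 2 - (m + 1 : ℕ)) / 2 = x + 1 / 2 by rw [hx]; push_cast; ring,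
        show ((0 : ℝ) + n - k + 1 - (m + 1 : ℕ)) / 2 = y + 1 / 2 by rw [hy]; push_cast; ring]
      generalize Real.Gamma (x + 1 / 2) = G at *
      generalize Real.Gamma (y + 1 / 2) = H at *
      field_simp

theorem gamma_quotient_telescoping (n k a b : ℕ) (hk : 1 ≤ k) (hn : 2 * k + 1 ≤ n)
    (ha : 2 ≤ a) (hb1 : 1 ≤ b) (hbk : b ≤ k) :
    (∏ j ∈ Finset.Icc 1 k,
        Real.Gamma ((hwt a b j + k + 1 - j) / 2) * Real.Gamma ((hwt a b j + n - k - j) / 2) /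
          (Real.Gamma ((hwt a b j + k + 2 - j) / 2) *
            Real.Gamma ((hwt a b j + n - k + 1 - j) / 2))) =
      Real.Gamma ((a + k) / 2) * Real.Gamma ((a + n - k - 1) / 2) /
          (Real.Gamma ((a + k + 1) / 2) * Real.Gamma ((a + n - k) / 2)) *
        (Real.Gamma (1 / 2) * Real.Gamma ((n - 2 * k) / 2) /
          (Real.Gamma ((k + 2) / 2) * Real.Gamma ((n - k + 1) / 2))) *
        (((k : ℝ) - b + 1) * ((n : ℝ) - k - b) / 4) := by
  rw [partial_prod n k a b hn hb1 k hk le_rfl, min_eq_left hbk,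
    show (k : ℝ) + 1 - k = 1 by ring, show (n : ℝ) - k - k = n - 2 * k by ring]
end
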